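/- arXiv:1605.06660 — 2 statements merged into one kernel-verified Lean document; each statement's English description precedes it below -/
import Mathlib

section
/- For every integer n ≥ 1, every nonnegative integer p, every λ ∈ {-1, 0}, every real α with 0 ≤ α < 1/3 and every x ∈ I, the third moment of the generalized operator satisfies L_n^{(α)}(t³; x) := Σ_k w_{n,k}^{(α)}(x)·(k/n)³ = ((n+p)x/(n³(1-(λ+1)α))) · [ (n+p+2λ+1)(n+p+2(2λ+1))·(x+α)(x+2α)/((1-(3λ+2)α)(1-(5λ+3)α)) + 3(n+p+2λ+1)(x+α)/(1-(3λ+2)α) + 1 ], the sum/series being convergent. -/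
/-!
For both values of `λ` the weights are a probability distribution on `ℕ`, built from the rising
products `risingStep α x k = x (x + α) ⋯ (x + (k-1) α)`. With `N = n + p` they are the Pólya
distribution with parameters `x`, `1 - x` (`λ = -1`), respectively the inverse Pólya distribution
with parameters `x`, `1` (`λ = 0`).

Multiplying such a distribution `u` by `k` and shifting `k` by one gives a constant multiple of a
distribution of the same family: `x` becomes `x + α`, and `N` becomes `N - 1` (Pólya), or `N`
becomes `N + 1` and the second parameter `A` becomes `A - α` (inverse Pólya). Three such shifts
reduce the third moment to the total masses (`hasSum_mul_cube`); the condition `α < 1/3` keeps the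
second parameter `1 - 3α` positive in the inverse Pólya case.

The total mass of the Pólya distribution is Vandermonde's identity (`risingStep_vandermonde`). For
the inverse Pólya distribution it is shown by induction on `N`: the partial sums for `N` and `N + 1`
differ by an explicit `h K ≥ 0` (`sum_invPolya_sub`), so the series for `N + 1` converges and `h`
has a limit `L ≥ 0`. As `h K` is the `K`-th term for `N + 1` times an affine function of `K`,
a positive `L` would bound that term below by a multiple of `1 / (K + 1)`, contradicting
summability. So `L = 0` and the masses for `N` and `N + 1` agree.
-/

/-- The weights `w_{n,k}^{(α)}(x)` of the generalized positive linear operator,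
for the parameter `lam`(= λ) which is `-1` or `0`.  Empty products equal `1`;
for `lam = -1` and `k > n + p` the binomial coefficient vanishes, so these
weights vanish and summing over all `k : ℕ` is the same as summing over
`0 ≤ k ≤ n + p`. -/
noncomputable def w (n p : ℕ) (lam : ℤ) (α x : ℝ) (k : ℕ) : ℝ :=
  (((n : ℝ) + p) / ((n : ℝ) + p + ((lam : ℝ) + 1) * k)) *
    (Nat.choose ((n : ℤ) + p + (lam + 1) * k).toNat k : ℝ) *
    (∏ i ∈ Finset.range k, (x + (i : ℝ) * α)) *
    (∏ i ∈ Finset.range ((n : ℤ) + p + lam * k).toNat,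
        (1 + (lam : ℝ) * x + (i : ℝ) * α)) /
    (∏ i ∈ Finset.range ((n : ℤ) + p + (lam + 1) * k).toNat,
        (1 + ((lam : ℝ) + 1) * x + (i : ℝ) * α))

/-- The interval `I`: `[0,1]` when `λ = -1` and `[0,∞)` when `λ = 0`. -/
noncomputable def Iset (lam : ℤ) : Set ℝ :=
  if lam = -1 then Set.Icc (0 : ℝ) 1 else Set.Ici (0 : ℝ)

/-- The rising product `x (x + α) ⋯ (x + (k-1) α)` of length `k` and step `α`. -/
noncomputable def risingStep (α x : ℝ) (k : ℕ) : ℝ :=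
  ∏ i ∈ Finset.range k, (x + (i : ℝ) * α)

lemma risingStep_zero (α x : ℝ) : risingStep α x 0 = 1 := by simp [risingStep]

lemma risingStep_succ (α x : ℝ) (k : ℕ) :
    risingStep α x (k + 1) = risingStep α x k * (x + k * α) := by
  simp [risingStep, Finset.prod_range_succ]

lemma risingStep_succ' (α x : ℝ) (k : ℕ) :
    risingStep α x (k + 1) = x * risingStep α (x + α) k := by
  simp only [risingStep, Finset.prod_range_succ', Nat.cast_add, Nat.cast_one, Nat.cast_zero,
    zero_mul, add_zero]
  rw [mul_comm]
  congr 1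
  exact Finset.prod_congr rfl fun i _ => by ring

lemma risingStep_nonneg {α x : ℝ} (hα : 0 ≤ α) (hx : 0 ≤ x) (k : ℕ) : 0 ≤ risingStep α x k :=
  Finset.prod_nonneg fun i _ => by positivity

lemma risingStep_pos {α x : ℝ} (hα : 0 ≤ α) (hx : 0 < x) (k : ℕ) : 0 < risingStep α x k :=
  Finset.prod_pos fun i _ => by positivity

/-! ### Reduction of the third moment to total masses -/

lemma hasSum_of_eq {f g : ℕ → ℝ} {a b : ℝ} (h : HasSum f a) (hfg : ∀ k, g k = f k) (hab : b = a) :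
    HasSum g b := by
  rwa [hab, funext hfg]

lemma hasSum_mul_index {u v : ℕ → ℝ} {c s : ℝ} (g : ℕ → ℝ)
    (huv : ∀ k : ℕ, u (k + 1) * (k + 1) = c * v k) (h : HasSum (fun k => v k * g (k + 1)) s) :
    HasSum (fun k : ℕ => u k * k * g k) (c * s) := by
  rw [← hasSum_nat_add_iff' 1]
  simp only [Finset.sum_range_one, Nat.cast_zero, mul_zero, zero_mul, sub_zero]
  refine hasSum_of_eq (h.mul_left c) (fun k => ?_) rfl
  push_cast
  rw [huv]
  ring

/-- The third moment of `u`, where `u, v₁, v₂, v₃` is a chain in which multiplying by the index and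
shifting leads from each sequence to a multiple of the next. -/
lemma hasSum_mul_cube {u v₁ v₂ v₃ : ℕ → ℝ} {c₁ c₂ c₃ : ℝ}
    (h₁ : ∀ k : ℕ, u (k + 1) * (k + 1) = c₁ * v₁ k)
    (h₂ : ∀ k : ℕ, v₁ (k + 1) * (k + 1) = c₂ * v₂ k)
    (h₃ : ∀ k : ℕ, v₂ (k + 1) * (k + 1) = c₃ * v₃ k)
    (s₁ : HasSum v₁ 1) (s₂ : HasSum v₂ 1) (s₃ : HasSum v₃ 1) :
    HasSum (fun k : ℕ => u k * (k : ℝ) ^ 3) (c₁ * (1 + c₂ * (3 + c₃))) := by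
  have a₃ : HasSum (fun k : ℕ => v₂ k * k * 1) (c₃ * 1) :=
    hasSum_mul_index (fun _ => 1) h₃ (by simpa using s₃)
  have a₂ : HasSum (fun k : ℕ => v₁ k * k * ((k : ℝ) + 2)) (c₂ * (3 + c₃)) := by
    refine hasSum_mul_index (fun k => (k : ℝ) + 2) h₂ ?_
    exact hasSum_of_eq ((s₂.mul_left 3).add a₃) (fun k => by push_cast; ring) (by ring)
  have a₁ : HasSum (fun k : ℕ => u k * k * (k : ℝ) ^ 2) (c₁ * (1 + c₂ * (3 + c₃))) := by
    refine hasSum_mul_index (fun k => (k : ℝ) ^ 2) h₁ ?_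
    exact hasSum_of_eq (s₁.add a₂) (fun k => by push_cast; ring) rfl
  exact hasSum_of_eq a₁ (fun k => by ring) rfl

/-! ### The Pólya distribution -/

/-- The Vandermonde identity for rising products of step `α`. -/
lemma risingStep_vandermonde (α x y : ℝ) (N : ℕ) :
    ∑ ij ∈ Finset.HasAntidiagonal.antidiagonal N,
        (N.choose ij.1 : ℝ) * (risingStep α x ij.1 * risingStep α y ij.2)
      = risingStep α (x + y) N := by
  induction N with
  | zero => simp [risingStep_zero]
  | succ N ih =>
    rw [Finset.sum_antidiagonal_choose_succ_mul (fun i j => risingStep α x i * risingStep α y j),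
      ← Finset.sum_add_distrib, risingStep_succ, ← ih, Finset.sum_mul]
    refine Finset.sum_congr rfl fun ij hij => ?_
    have hN : (N : ℝ) = ij.1 + ij.2 := by
      exact_mod_cast (Finset.HasAntidiagonal.mem_antidiagonal.mp hij).symm
    have hc : (N.choose ij.2 : ℝ) = N.choose ij.1 := by
      rw [Nat.choose_symm_of_eq_add (Finset.HasAntidiagonal.mem_antidiagonal.mp hij).symm]
    simp only [risingStep_succ, hc, hN]
    ring

/-- The Pólya distribution with parameters `x`, `y` and `N` draws. Values at `k > N` vanish because
the binomial coefficient does. -/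
noncomputable def polya (α x y : ℝ) (N k : ℕ) : ℝ :=
  (N.choose k : ℝ) * risingStep α x k * risingStep α y (N - k) / risingStep α (x + y) N

lemma hasSum_polya {α x y : ℝ} (hα : 0 ≤ α) (hxy : 0 < x + y) (N : ℕ) :
    HasSum (polya α x y N) 1 := by
  have h : HasSum (polya α x y N) (∑ k ∈ Finset.range (N + 1), polya α x y N k) :=
    hasSum_sum_of_ne_finset_zero (fun k hk => by
      have : N < k := by simpa using hk
      simp [polya, Nat.choose_eq_zero_of_lt this])
  refine hasSum_of_eq h (fun _ => rfl) ?_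
  have hv := risingStep_vandermonde α x y N
  rw [Finset.Nat.sum_antidiagonal_eq_sum_range_succ_mk] at hv
  simp only [polya, ← Finset.sum_div]
  rw [eq_div_iff (risingStep_pos hα hxy N).ne', one_mul, ← hv]
  exact Finset.sum_congr rfl fun k _ => by ring

/-- For `N = 0` both sides vanish, so the truncated `N - 1` is harmless. -/
lemma polya_shift {α x y : ℝ} (hα : 0 ≤ α) (hxy : 0 < x + y) (N k : ℕ) :
    polya α x y N (k + 1) * (k + 1) = (N * x / (x + y)) * polya α (x + α) y (N - 1) k := by
  cases N with
  | zero => simp [polya]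
  | succ N =>
    have hc : ((N + 1).choose (k + 1) : ℝ) * (k + 1) = (N + 1) * N.choose k := by
      exact_mod_cast (Nat.add_one_mul_choose_eq N k).symm
    have hp := (risingStep_pos hα (show 0 < x + y + α by linarith) N).ne'
    have e : x + α + y = x + y + α := by ring
    simp only [polya, Nat.add_sub_cancel, Nat.add_sub_add_right, risingStep_succ' α x,
      risingStep_succ' α (x + y), e]
    field_simp
    push_cast
    linear_combination risingStep α (x + α) k * risingStep α y (N - k) * x * hc

/-! ### The inverse Pólya distribution -/

/-- The inverse Pólya distribution with parameters `x`, `A`: the number `k` of failures before the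
`N`-th success. For `N = 0` the truncated subtraction makes it the point mass at `0`. -/
noncomputable def invPolya (α x A : ℝ) (N k : ℕ) : ℝ :=
  (Nat.choose (N + k - 1) k : ℝ) * risingStep α x k * risingStep α A N / risingStep α (A + x) (N + k)

lemma invPolya_nonneg {α x A : ℝ} (hα : 0 ≤ α) (hx : 0 ≤ x) (hA : 0 < A) (N k : ℕ) :
    0 ≤ invPolya α x A N k := by
  have h₁ := risingStep_nonneg hα hx k
  have h₂ := risingStep_nonneg hα hA.le N
  have h₃ := risingStep_nonneg hα (add_nonneg hA.le hx) (N + k)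
  unfold invPolya
  positivity

/-- The difference of the distribution functions for `N` and `N + 1` at `K` is the probability that
`N + K` draws contain exactly `N` successes and the next draw fails. -/
lemma sum_invPolya_sub {α x A : ℝ} (hα : 0 ≤ α) (hx : 0 ≤ x) (hA : 0 < A) (N K : ℕ) :
    ∑ k ∈ Finset.range (K + 1), invPolya α x A N k
        - ∑ k ∈ Finset.range (K + 1), invPolya α x A (N + 1) k
      = invPolya α x A (N + 1) K * ((x + K * α) / (A + N * α)) := by
  have hAx : 0 < A + x := by linarith
  have hAN : A + N * α ≠ 0 := by positivity
  induction K with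
  | zero =>
    have h₁ := (risingStep_pos hα hAx N).ne'
    have h₂ : A + x + N * α ≠ 0 := by positivity
    simp only [zero_add, Finset.sum_range_one, invPolya, risingStep_succ, risingStep_zero, add_zero,
      Nat.choose_zero_right]
    field_simp
    push_cast
    ring
  | succ K ih =>
    rw [Finset.sum_range_succ _ (K + 1), Finset.sum_range_succ _ (K + 1), add_sub_add_comm, ih]
    have h₁ := (risingStep_pos hα hAx (N + K)).ne'
    have h₂ : A + x + (N + K) * α ≠ 0 := by positivity
    have h₃ : A + x + (N + K + 1) * α ≠ 0 := by positivity
    have hc : ((N + K + 1).choose (K + 1) : ℝ) = (N + K).choose K + (N + K).choose (K + 1) := by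
      exact_mod_cast Nat.choose_succ_succ (N + K) K
    have e₄ : N + 1 + K = N + K + 1 := by omega
    have e₅ : N + (K + 1) = N + K + 1 := by omega
    have e₆ : N + 1 + (K + 1) = N + K + 1 + 1 := by omega
    simp only [invPolya, e₄, e₅, e₆, Nat.add_sub_cancel, risingStep_succ, hc]
    push_cast
    field_simp
    ring

lemma hasSum_invPolya {α x A : ℝ} (hα : 0 ≤ α) (hx : 0 ≤ x) (hA : 0 < A) (N : ℕ) :
    HasSum (invPolya α x A N) 1 := by
  induction N with
  | zero =>
    have h := hasSum_single (f := invPolya α x A 0) 0 (fun k hk => by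
      have : (k - 1).choose k = 0 := Nat.choose_eq_zero_of_lt (by omega)
      simp [invPolya, this])
    simpa [invPolya, risingStep_zero] using h
  | succ N ih =>
    have hnn := invPolya_nonneg hα hx hA (N + 1)
    have hAN : 0 < A + N * α := by positivity
    have hh : ∀ K, 0 ≤ invPolya α x A (N + 1) K * ((x + K * α) / (A + N * α)) := fun K =>
      mul_nonneg (hnn K) (by positivity)
    have hsum : Summable (invPolya α x A (N + 1)) := by
      refine summable_of_sum_range_le (c := 1) hnn fun K => ?_
      have h₁ := sum_invPolya_sub hα hx hA N K
      have h₂ := ih.summable.sum_le_tsum (Finset.range (K + 1))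
        fun k _ => invPolya_nonneg hα hx hA N k
      rw [ih.tsum_eq] at h₂
      have h₃ := hh K
      rw [Finset.sum_range_succ _ K] at h₁
      rw [Finset.sum_range_succ _ K] at h₁
      rw [Finset.sum_range_succ _ K] at h₂
      linarith [hnn K]
    obtain ⟨S, hS⟩ := hsum
    -- `L = 1 - S` is the limit of the difference of the partial sums.
    have hlim : Filter.Tendsto
        (fun K : ℕ => invPolya α x A (N + 1) K * ((x + K * α) / (A + N * α)))
        Filter.atTop (nhds (1 - S)) := by
      have h := (ih.tendsto_sum_nat.sub hS.tendsto_sum_nat).comp (Filter.tendsto_add_atTop_nat 1)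
      refine h.congr fun K => ?_
      exact sum_invPolya_sub hα hx hA N K
    have hL : 0 ≤ 1 - S := ge_of_tendsto' hlim hh
    rcases hL.eq_or_lt with hL | hL
    · rwa [show (1 : ℝ) = S by linarith]
    · exfalso
      have hev := hlim.eventually (lt_mem_nhds (half_lt_self hL))
      set c := (1 - S) / 2 * (A + N * α) / (x + α + 1) with hc
      have hD : 0 < x + α + 1 := by linarith
      have hc0 : 0 < c := by positivity
      -- The terms eventually dominate a multiple of the harmonic series.
      have hdom : ∀ᶠ K : ℕ in Filter.atTop,
          c * (1 / ((K : ℝ) + 1)) ≤ invPolya α x A (N + 1) K := by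
        filter_upwards [hev] with K hK
        have hK1 : (0 : ℝ) < K + 1 := by positivity
        rw [← mul_div_assoc, lt_div_iff₀ hAN] at hK
        have hle : x + K * α ≤ (x + α + 1) * (K + 1) := by
          nlinarith [mul_nonneg hx (Nat.cast_nonneg (α := ℝ) K), Nat.cast_nonneg (α := ℝ) K]
        have := mul_le_mul_of_nonneg_left hle (hnn K)
        rw [hc, mul_one_div, div_div, div_le_iff₀ (by positivity)]
        linarith
      have hharm : Summable fun K : ℕ => c * (1 / ((K : ℝ) + 1)) := by
        refine Summable.of_norm_bounded_eventually_nat hS.summable ?_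
        filter_upwards [hdom] with K hK
        rw [Real.norm_of_nonneg (by positivity)]
        exact hK
      rw [summable_mul_left_iff hc0.ne'] at hharm
      have := (summable_nat_add_iff (f := fun K : ℕ => 1 / (K : ℝ)) 1).mp (by simpa using hharm)
      exact Real.not_summable_one_div_natCast this

lemma invPolya_shift {α x A : ℝ} (hα : 0 ≤ α) (hx : 0 ≤ x) (hA : 0 < A - α) (N k : ℕ) :
    invPolya α x A N (k + 1) * (k + 1)
      = (N * x / (A - α)) * invPolya α (x + α) (A - α) (N + 1) k := by
  have hc : ((N + k).choose (k + 1) : ℝ) * (k + 1) = (N + k).choose k * N := by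
    have := Nat.choose_succ_right_eq (N + k) k
    rw [Nat.add_sub_cancel] at this
    exact_mod_cast this
  have hp := (risingStep_pos hα (show 0 < A + x by linarith) (N + k + 1)).ne'
  have e₃ : N + 1 + k = N + k + 1 := by omega
  have e₄ : A - α + (x + α) = A + x := by ring
  have e₅ : N + (k + 1) = N + k + 1 := by omega
  simp only [invPolya, e₃, e₄, e₅, Nat.add_sub_cancel, risingStep_succ' α x, risingStep_succ' α (A - α),
    sub_add_cancel]
  field_simp
  linear_combination x * risingStep α (x + α) k * risingStep α A N * hc

/-! ### The weights and their third moment -/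

lemma w_neg_one {n p : ℕ} (hn : 1 ≤ n) (α x : ℝ) (k : ℕ) :
    w n p (-1) α x k = polya α x (1 - x) (n + p) k := by
  have hn' : (n : ℝ) + p ≠ 0 := by positivity
  have e₁ : ((n : ℤ) + p + (-1 + 1) * k).toNat = n + p := by omega
  have e₂ : ((n : ℤ) + p + -1 * k).toNat = n + p - k := by omega
  simp only [w, polya, risingStep, e₁, e₂]
  have e₃ : 1 + ((-1 : ℤ) : ℝ) * x = 1 - x := by push_cast; ring
  have e₄ : 1 + (((-1 : ℤ) : ℝ) + 1) * x = x + (1 - x) := by push_cast; ring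
  have e₅ : ((n : ℝ) + p) / ((n : ℝ) + p + (((-1 : ℤ) : ℝ) + 1) * k) = 1 := by
    push_cast; simp [hn']
  rw [e₃, e₄, e₅, one_mul]

lemma w_zero {n p : ℕ} (hn : 1 ≤ n) (α x : ℝ) (k : ℕ) :
    w n p 0 α x k = invPolya α x 1 (n + p) k := by
  have e₁ : ((n : ℤ) + p + (0 + 1) * k).toNat = n + p + k := by omega
  have e₂ : ((n : ℤ) + p + 0 * k).toNat = n + p := by omega
  simp only [w, invPolya, risingStep, e₁, e₂]
  simp only [Int.cast_zero, zero_mul, zero_add, one_mul, add_zero]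
  have hn' : (n : ℝ) + p + k ≠ 0 := by positivity
  have hc : ((n : ℝ) + p) / (n + p + k) * ((n + p + k).choose k : ℝ)
      = ((n + p + k - 1).choose k : ℝ) := by
    obtain ⟨m, hm⟩ : ∃ m, n + p = m + 1 := ⟨n + p - 1, by omega⟩
    have h := Nat.choose_mul_succ_eq (m + k) k
    rw [show m + k + 1 - k = m + 1 by omega] at h
    have hm' : (n : ℝ) + p = m + 1 := by exact_mod_cast hm
    rw [hm'] at hn' ⊢
    rw [hm, show m + 1 + k - 1 = m + k by omega, show m + 1 + k = m + k + 1 by omega,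
      div_mul_eq_mul_div, div_eq_iff hn']
    have h' : ((m + k).choose k : ℝ) * (m + k + 1) = (m + k + 1).choose k * (m + 1) := by
      exact_mod_cast h
    linear_combination -h'
  rw [hc]

/-- the third moment of the generalized operator, for `0 ≤ α < 1/3`:
`L_n^{(α)}(t³;x) = ((n+p)x/(n³(1-(λ+1)α))) · [ ... ]`, the sum/series being convergent. -/
theorem third_moment (n p : ℕ) (hn : 1 ≤ n) (lam : ℤ) (hlam : lam = -1 ∨ lam = 0)
    (α : ℝ) (hα : 0 ≤ α) (hα3 : α < 1/3) (x : ℝ) (hx : x ∈ Iset lam) :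
    HasSum (fun k : ℕ => w n p lam α x k * ((k : ℝ) / n) ^ 3)
      (((n : ℝ) + p) * x / ((n : ℝ) ^ 3 * (1 - ((lam : ℝ) + 1) * α)) *
        (((n : ℝ) + p + 2 * (lam : ℝ) + 1) * ((n : ℝ) + p + 2 * (2 * (lam : ℝ) + 1)) *
            (x + α) * (x + 2 * α) /
            ((1 - (3 * (lam : ℝ) + 2) * α) * (1 - (5 * (lam : ℝ) + 3) * α)) +
          3 * ((n : ℝ) + p + 2 * (lam : ℝ) + 1) * (x + α) / (1 - (3 * (lam : ℝ) + 2) * α) +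
          1)) := by
  have hn0 : (n : ℝ) ≠ 0 := by positivity
  rcases hlam with rfl | rfl
  · have h₁ : 0 < x + (1 - x) := by linarith
    have h₂ : 0 < x + α + (1 - x) := by linarith
    have h₃ : 0 < x + α + α + (1 - x) := by linarith
    have h₄ : 0 < x + α + α + α + (1 - x) := by linarith
    have h := hasSum_mul_cube (polya_shift hα h₁ (n + p)) (polya_shift hα h₂ (n + p - 1))
      (polya_shift hα h₃ (n + p - 1 - 1)) (hasSum_polya hα h₂ _) (hasSum_polya hα h₃ _)
      (hasSum_polya hα h₄ _)
    refine hasSum_of_eq (h.div_const ((n : ℝ) ^ 3)) (fun k => ?_) ?_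
    · rw [w_neg_one hn, div_pow, mul_div_assoc]
    · have b₁ : ((n + p - 1 : ℕ) : ℝ) = (n : ℝ) + p - 1 := by
        rw [Nat.cast_sub (by omega)]; push_cast; ring
      -- The truncated `N - 2` only differs from the real one at `N = 1`, where `N - 1 = 0`.
      have b₂ : ((n : ℝ) + p - 1) * ((n + p - 1 - 1 : ℕ) : ℝ)
          = ((n : ℝ) + p - 1) * ((n : ℝ) + p - 2) := by
        rcases Nat.lt_or_ge 1 (n + p) with h2 | h2
        · rw [Nat.cast_sub (by omega), b₁]; push_cast; ring
        · have : (n : ℝ) + p = 1 := by exact_mod_cast (show n + p = 1 by omega)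
          rw [this]; ring
      have d₁ : x + (1 - x) = 1 := by ring
      have d₂ : x + α + (1 - x) = 1 + α := by ring
      have d₃ : x + α + α + (1 - x) = 1 + 2 * α := by ring
      have g₁ : 1 + α ≠ 0 := by positivity
      have g₂ : 1 + 2 * α ≠ 0 := by positivity
      rw [b₁, d₁, d₂, d₃]
      push_cast
      rw [show 1 - (3 * (-1 : ℝ) + 2) * α = 1 + α by ring,
        show 1 - (5 * (-1 : ℝ) + 3) * α = 1 + 2 * α by ring,
        show 1 - ((-1 : ℝ) + 1) * α = 1 by ring]
      field_simp
      linear_combination -x * (x + α) * (x + 2 * α) * b₂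
  · have hx0 : 0 ≤ x := by simpa [Iset] using hx
    have h₁ : 0 < 1 - α := by linarith
    have h₂ : 0 < 1 - α - α := by linarith
    have h₃ : 0 < 1 - α - α - α := by linarith
    have x₁ : 0 ≤ x + α := by positivity
    have x₂ : 0 ≤ x + α + α := by positivity
    have x₃ : 0 ≤ x + α + α + α := by positivity
    have h := hasSum_mul_cube (invPolya_shift hα hx0 h₁ (n + p))
      (invPolya_shift hα x₁ h₂ (n + p + 1)) (invPolya_shift hα x₂ h₃ (n + p + 1 + 1))
      (hasSum_invPolya hα x₁ h₁ _) (hasSum_invPolya hα x₂ h₂ _) (hasSum_invPolya hα x₃ h₃ _)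
    refine hasSum_of_eq (h.div_const ((n : ℝ) ^ 3)) (fun k => ?_) ?_
    · rw [w_zero hn, div_pow, mul_div_assoc]
    · push_cast
      have g₁ : 1 - α ≠ 0 := by linarith
      have g₂ : 1 - 2 * α ≠ 0 := by linarith
      have g₃ : 1 - 3 * α ≠ 0 := by linarith
      rw [show 1 - α - α - α = 1 - 3 * α by ring, show 1 - α - α = 1 - 2 * α by ring,
        show 1 - (3 * (0 : ℝ) + 2) * α = 1 - 2 * α by ring,
        show 1 - (5 * (0 : ℝ) + 3) * α = 1 - 3 * α by ring,
        show 1 - ((0 : ℝ) + 1) * α = 1 - α by ring]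
      field_simp
      ring
end

section
/- Let p be a fixed nonnegative integer, λ ∈ {-1, 0}, and let (α_n)_{n≥1} be a sequence of reals with α_n ≥ 0 for all n and sup_n n·α_n < ∞. Then there exist a constant A₁ > 0 and an integer N ≥ 1 such that for all n ≥ N and all x ∈ I, the second central moment satisfies Σ_k w_{n,k}^{(α_n)}(x)·(k/n - x)² ≤ A₁·(1+x²)/n. -/
/-- The rising factorial `x (x + α) ⋯ (x + (k - 1) α)` of step `α`. -/
noncomputable def rise (x α : ℝ) (k : ℕ) : ℝ := ∏ i ∈ Finset.range k, (x + (i : ℝ) * α)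

lemma rise_succ (x α : ℝ) (k : ℕ) : rise x α (k + 1) = rise x α k * (x + k * α) := by
  simp [rise, Finset.prod_range_succ]

lemma rise_zero (x α : ℝ) : rise x α 0 = 1 := by simp [rise]

lemma rise_nonneg {x α : ℝ} (hx : 0 ≤ x) (hα : 0 ≤ α) (k : ℕ) : 0 ≤ rise x α k :=
  Finset.prod_nonneg fun _ _ => by positivity

lemma rise_pos {x α : ℝ} (hx : 0 < x) (hα : 0 ≤ α) (k : ℕ) : 0 < rise x α k :=
  Finset.prod_pos fun _ _ => by positivity

/-- The weights for `λ = 0`. The truncated subtraction gives the right convention at `m = 0`: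
unit mass at `k = 0`. -/
noncomputable def polyaNB (x α : ℝ) (m k : ℕ) : ℝ :=
  (Nat.choose (m + k - 1) k : ℝ) * rise x α k * rise 1 α m / rise (1 + x) α (m + k)

/-- The weights for `λ = -1`. They vanish for `k > m`. -/
noncomputable def polyaBin (x α : ℝ) (m k : ℕ) : ℝ :=
  (Nat.choose m k : ℝ) * rise x α k * rise (1 - x) α (m - k) / rise 1 α m

lemma w_zero_eq (n p : ℕ) (hn : 1 ≤ n) (α x : ℝ) (k : ℕ) :
    w n p 0 α x k = polyaNB x α (n + p) k := by
  obtain ⟨m, hm⟩ : ∃ m, n + p = m + 1 := ⟨n + p - 1, by omega⟩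
  have h1 : ((n : ℤ) + p + (0 + 1) * k).toNat = n + p + k := by omega
  have h2 : ((n : ℤ) + p + 0 * k).toNat = n + p := by omega
  have hmr : (n : ℝ) + p = m + 1 := by exact_mod_cast hm
  have hc := Nat.choose_mul_succ_eq (m + k) k
  rw [show m + k + 1 - k = m + 1 by omega] at hc
  have hc' : ((m + k).choose k : ℝ) * (m + k + 1) = ((m + k + 1).choose k : ℝ) * (m + 1) := by
    exact_mod_cast hc
  unfold w polyaNB rise
  rw [h1, h2, hm, hmr, show m + 1 + k - 1 = m + k by omega, show m + 1 + k = m + k + 1 by omega]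
  have hpos : (0 : ℝ) < m + k + 1 := by positivity
  have hcoef : ((m : ℝ) + 1) / (m + 1 + (((0 : ℤ) : ℝ) + 1) * k) * ((m + k + 1).choose k : ℝ)
      = (m + k).choose k := by
    rw [show (m : ℝ) + 1 + (((0 : ℤ) : ℝ) + 1) * k = m + k + 1 by push_cast; ring]
    rw [div_mul_eq_mul_div, div_eq_iff hpos.ne']
    linarith
  rw [hcoef]
  simp

lemma w_neg_one_eq (n p : ℕ) (hn : 1 ≤ n) (α x : ℝ) (k : ℕ) :
    w n p (-1) α x k = polyaBin x α (n + p) k := by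
  have h1 : ((n : ℤ) + p + (-1 + 1) * k).toNat = n + p := by omega
  have h2 : ((n : ℤ) + p + -1 * k).toNat = n + p - k := by omega
  have hpos : (0 : ℝ) < (n : ℝ) + p := by
    have : (1 : ℝ) ≤ n := by exact_mod_cast hn
    positivity
  unfold w polyaBin rise
  rw [h1, h2]
  simp [hpos.ne', sub_eq_add_neg]

/-! ### Partial sums of the weights -/

/-- Vandermonde's identity for rising factorials of step `α`. -/
lemma sum_antidiagonal_rise (x y α : ℝ) (m : ℕ) :
    ∑ ij ∈ Finset.HasAntidiagonal.antidiagonal m, (m.choose ij.1 : ℝ) * (rise x α ij.1 * rise y α ij.2)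
      = rise (x + y) α m := by
  induction m with
  | zero => simp [rise_zero]
  | succ m ih =>
    rw [Finset.sum_antidiagonal_choose_succ_mul (fun i j => rise x α i * rise y α j), rise_succ,
      ← ih, Finset.sum_mul, ← Finset.sum_add_distrib]
    refine Finset.sum_congr rfl fun ij hij => ?_
    have h := Finset.HasAntidiagonal.mem_antidiagonal.1 hij
    have hr : (m : ℝ) = ij.1 + ij.2 := by exact_mod_cast h.symm
    rw [Nat.choose_symm_of_eq_add (h.symm.trans (add_comm _ _)), rise_succ, rise_succ, hr]
    ring

lemma polyaBin_nonneg {x α : ℝ} (hx : 0 ≤ x) (hx1 : x ≤ 1) (hα : 0 ≤ α) (m k : ℕ) :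
    0 ≤ polyaBin x α m k := by
  have h1 := rise_nonneg hx hα k
  have h2 := rise_nonneg (sub_nonneg.2 hx1) hα (m - k)
  have h3 := rise_nonneg zero_le_one hα m
  unfold polyaBin
  positivity

lemma polyaNB_nonneg {x α : ℝ} (hx : 0 ≤ x) (hα : 0 ≤ α) (m k : ℕ) :
    0 ≤ polyaNB x α m k := by
  have h1 := rise_nonneg hx hα k
  have h2 := rise_nonneg (by linarith : 0 ≤ 1 + x) hα (m + k)
  have h3 := rise_nonneg zero_le_one hα m
  unfold polyaNB
  positivity

lemma sum_polyaBin_le {x α : ℝ} (hx : 0 ≤ x) (hx1 : x ≤ 1) (hα : 0 ≤ α) (m K : ℕ) :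
    ∑ k ∈ Finset.range K, polyaBin x α m k ≤ 1 := by
  have hfull : ∑ k ∈ Finset.range (m + 1), polyaBin x α m k = 1 := by
    have h := sum_antidiagonal_rise x (1 - x) α m
    rw [Finset.Nat.sum_antidiagonal_eq_sum_range_succ
      (fun i j => (m.choose i : ℝ) * (rise x α i * rise (1 - x) α j)),
      show x + (1 - x) = 1 by ring] at h
    have hp := rise_pos zero_lt_one hα m
    simp only [polyaBin]
    rw [← Finset.sum_div, div_eq_one_iff_eq hp.ne', ← h]
    exact Finset.sum_congr rfl fun _ _ => by ring
  calc ∑ k ∈ Finset.range K, polyaBin x α m k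
      ≤ ∑ k ∈ Finset.range (max K (m + 1)), polyaBin x α m k :=
        Finset.sum_le_sum_of_subset_of_nonneg (Finset.range_mono (le_max_left _ _))
          fun _ _ _ => polyaBin_nonneg hx hx1 hα _ _
    _ = ∑ k ∈ Finset.range (m + 1), polyaBin x α m k := by
        refine (Finset.sum_subset (Finset.range_mono (le_max_right _ _)) fun k _ hk => ?_).symm
        have : m < k := by simpa [Nat.lt_succ_iff] using hk
        simp [polyaBin, Nat.choose_eq_zero_of_lt this]
    _ = 1 := hfull

/-- Conservation of probability flow between the levels of `m` and `m + 1` failures: the second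
summand is the probability of reaching `K + 1` successes at level `m`. -/
lemma sum_polyaNB_succ_add {x α : ℝ} (hx : 0 ≤ x) (hα : 0 ≤ α) (m K : ℕ) :
    ∑ k ∈ Finset.range (K + 1), polyaNB x α (m + 1) k
      + ((m + K).choose K : ℝ) * rise x α (K + 1) * rise 1 α m / rise (1 + x) α (m + K + 1)
      = ∑ k ∈ Finset.range (K + 1), polyaNB x α m k := by
  have hx1 : 0 < 1 + x := by linarith
  induction K with
  | zero =>
    have hp := rise_pos hx1 hα m
    have hq : 0 < 1 + x + m * α := by positivity
    simp only [zero_add, Finset.sum_range_one, polyaNB, add_zero, Nat.choose_zero_right,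
      rise_succ, rise_zero]
    field_simp
    simp
    left
    ring
  | succ K ih =>
    have hp := rise_pos hx1 hα (m + K + 1)
    have hq : 0 < 1 + x + (m + K + 1 : ℕ) * α := by positivity
    rw [Finset.sum_range_succ, Finset.sum_range_succ (fun k => polyaNB x α m k), ← ih]
    generalize ∑ k ∈ Finset.range (K + 1), polyaNB x α (m + 1) k = T
    have hc : ((m + K + 1).choose (K + 1) : ℝ) = (m + K).choose K + (m + K).choose (K + 1) := by
      exact_mod_cast Nat.choose_succ_succ (m + K) K
    simp only [polyaNB]
    rw [show m + 1 + (K + 1) - 1 = m + K + 1 by omega,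
      show m + 1 + (K + 1) = m + K + 1 + 1 by omega, show m + (K + 1) - 1 = m + K by omega,
      show m + (K + 1) = m + K + 1 by omega, hc, rise_succ (1 + x) α (m + K + 1),
      rise_succ 1 α m, rise_succ x α (K + 1)]
    field_simp
    push_cast
    ring

lemma sum_polyaNB_le {x α : ℝ} (hx : 0 ≤ x) (hα : 0 ≤ α) (m K : ℕ) :
    ∑ k ∈ Finset.range K, polyaNB x α m k ≤ 1 := by
  have key : ∑ k ∈ Finset.range (K + 1), polyaNB x α m k ≤ 1 := by
    induction m with
    | zero =>
      rw [Finset.sum_range_succ']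
      simp [polyaNB, rise_zero]
    | succ m ih =>
      have h1 := rise_nonneg hx hα (K + 1)
      have h2 := rise_nonneg (by linarith : 0 ≤ 1 + x) hα (m + K + 1)
      have h3 := rise_nonneg zero_le_one hα m
      have h4 : 0 ≤ ((m + K).choose K : ℝ) * rise x α (K + 1) * rise 1 α m
          / rise (1 + x) α (m + K + 1) := by positivity
      linarith [sum_polyaNB_succ_add hx hα m K]
  rw [Finset.sum_range_succ] at key
  linarith [polyaNB_nonneg hx hα m K]

/-! ### Recurrences in `k` -/

lemma polyaNB_rec {x α : ℝ} (hx : 0 ≤ x) (hα : 0 ≤ α) (m : ℕ) (hm : 1 ≤ m) (k : ℕ) :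
    ((k : ℝ) + 1) * (1 + x + (m + k) * α) * polyaNB x α m (k + 1)
      = (m + k) * (x + k * α) * polyaNB x α m k := by
  obtain ⟨m, rfl⟩ : ∃ j, m = j + 1 := ⟨m - 1, by omega⟩
  have hp := rise_pos (by linarith : 0 < 1 + x) hα (m + 1 + k)
  have hq : 0 < 1 + x + ((m + 1 + k : ℕ) : ℝ) * α := by positivity
  have hc : ((m : ℝ) + k + 1) * (m + k).choose k = (m + k + 1).choose (k + 1) * (k + 1) := by
    exact_mod_cast Nat.add_one_mul_choose_eq (m + k) k
  simp only [polyaNB]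
  rw [show m + 1 + (k + 1) - 1 = m + k + 1 by omega, show m + 1 + k - 1 = m + k by omega,
    ← add_assoc, rise_succ (1 + x), rise_succ x]
  rw [show (1 : ℝ) + x + ((m + 1 : ℕ) + k) * α = 1 + x + ((m + 1 + k : ℕ) : ℝ) * α by
    push_cast; ring]
  rw [mul_div_assoc', mul_div_assoc', div_eq_div_iff (by positivity) (by positivity)]
  push_cast at hc ⊢
  linear_combination (-(1 + x + ((m : ℝ) + 1 + k) * α) * rise x α k * (x + k * α) *
    rise 1 α (m + 1) * rise (1 + x) α (m + 1 + k)) * hc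

lemma polyaBin_rec {x α : ℝ} (m k : ℕ) :
    ((k : ℝ) + 1) * (1 - x + (m - (k + 1)) * α) * polyaBin x α m (k + 1)
      = (m - k) * (x + k * α) * polyaBin x α m k := by
  rcases lt_trichotomy k m with h | h | h
  · obtain ⟨j, rfl⟩ : ∃ j, m = k + 1 + j := ⟨m - (k + 1), by omega⟩
    have hc := Nat.choose_succ_right_eq (k + 1 + j) k
    rw [show k + 1 + j - k = j + 1 by omega] at hc
    have hc' : ((k + 1 + j).choose (k + 1) : ℝ) * (k + 1) = (k + 1 + j).choose k * (j + 1) := by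
      exact_mod_cast hc
    simp only [polyaBin]
    rw [show k + 1 + j - (k + 1) = j by omega, show k + 1 + j - k = j + 1 by omega,
      rise_succ, rise_succ]
    push_cast
    rw [mul_div_assoc', mul_div_assoc']
    congr 1
    linear_combination (1 - x + j * α) * rise x α k * (x + k * α) * rise (1 - x) α j * hc'
  · subst h
    simp [polyaBin]
  · simp [polyaBin, Nat.choose_eq_zero_of_lt h, Nat.choose_eq_zero_of_lt (Nat.lt_succ_of_lt h)]

/-! ### The moment bound from the recurrence -/

/-- `b` is chosen so that the terms linear in `k` match when `(k - n x)²` is expanded in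
`(a - e) k² - k (m x + d)`, `a k - m x` and `1`; the constant coefficient is then
`n² x² + m x b`. -/
lemma sum_sq_eq (v : ℕ → ℝ) (m n x a d e b : ℝ) (ha : a ≠ 0) (hr : a - e ≠ 0)
    (hb : b = ((m * x + d) / (a - e) - 2 * n * x) / a)
    (hrec : ∀ k : ℕ, ((k : ℝ) + 1) * (d + e * (k + 1)) * v (k + 1)
      = (m * x - a * k + k * (d + e * k)) * v k) (K : ℕ) :
    ∑ k ∈ Finset.range K, v k * ((k : ℝ) - n * x) ^ 2
      = (n ^ 2 * x ^ 2 + m * x * b) * ∑ k ∈ Finset.range K, v k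
        - K * (d + e * K) * v K * ((K - 1) / (a - e) + b) := by
  have hb' : a * b = (m * x + d) / (a - e) - 2 * n * x := by
    rw [hb]; field_simp
  induction K with
  | zero => simp
  | succ K ih =>
    rw [Finset.sum_range_succ, Finset.sum_range_succ, ih]
    push_cast
    rw [hrec K]
    obtain ⟨s, hs⟩ : ∃ s, s = (a - e)⁻¹ := ⟨_, rfl⟩
    have hs1 : (a - e) * s = 1 := by rw [hs]; exact mul_inv_cancel₀ hr
    simp only [div_eq_mul_inv, ← hs] at hb' ⊢
    linear_combination (-(K : ℝ) * v K) * hb' - (K : ℝ) ^ 2 * v K * hs1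

/-- The second-moment bound for any sub-probability weights obeying the recurrence, with constant
explicit in `C` and `p`. The hypothesis `hG` cannot be replaced by `0 ≤ d + e k`: this fails for `λ = -1` and large
`k`, where the weights vanish. -/
lemma tsum_sq_le (v : ℕ → ℝ) (m n x a d e α C p : ℝ)
    (hv : ∀ k, 0 ≤ v k) (hV : ∀ K, ∑ k ∈ Finset.range K, v k ≤ 1)
    (hG : ∀ k : ℕ, 0 ≤ (k : ℝ) * (d + e * k) * v k)
    (hrec : ∀ k : ℕ, ((k : ℝ) + 1) * (d + e * (k + 1)) * v (k + 1)
      = (m * x - a * k + k * (d + e * k)) * v k)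
    (hx : 0 ≤ x) (hp : 0 ≤ p) (hm : m = n + p) (hn : 1 ≤ n) (hα : 0 ≤ α) (hC : n * α ≤ C)
    (ha : 1 / 4 ≤ a) (ha1 : a ≤ 1) (haα : 1 - a ≤ α) (hr : 1 / 4 ≤ a - e) (he : e ≤ α)
    (hd : d ≤ 1 + x + m * α) (hd0 : 0 ≤ d) :
    ∑' k : ℕ, v k * ((k : ℝ) / n - x) ^ 2
      ≤ (16 * (C + p) ^ 2 + 64 * (1 + p) ^ 2 * C + 32 * (1 + p) * (1 + (1 + p) * C))
        * (1 + x ^ 2) / n := by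
  set A := 16 * (C + p) ^ 2 + 64 * (1 + p) ^ 2 * C + 32 * (1 + p) * (1 + (1 + p) * C) with hA
  have hn0 : 0 < n := by linarith
  have ha0 : 0 < a := by linarith
  have hr0 : 0 < a - e := by linarith
  have hC0 : 0 ≤ C := le_trans (by positivity) hC
  have hm0 : 0 ≤ m := by linarith
  have hmn : m ≤ (1 + p) * n := by nlinarith
  obtain ⟨b, hb⟩ : ∃ b, b = ((m * x + d) / (a - e) - 2 * n * x) / a := ⟨_, rfl⟩
  have hai : a⁻¹ ≤ 4 := by
    rw [inv_le_comm₀ ha0 (by norm_num)]; linarith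
  have hri : (a - e)⁻¹ ≤ 4 := by
    rw [inv_le_comm₀ hr0 (by norm_num)]; linarith
  have hai0 : 0 ≤ a⁻¹ := by positivity
  have hri0 : 0 ≤ (a - e)⁻¹ := by positivity
  have hc : n ^ 2 * x ^ 2 + m * x * b = x ^ 2 * ((n * (1 - a) + p) * a⁻¹) ^ 2
      + x ^ 2 * (m ^ 2 * e * (a⁻¹ ^ 2 * (a - e)⁻¹)) + m * x * d * (a⁻¹ * (a - e)⁻¹) := by
    rw [hb, hm]
    field_simp
    ring
  have hcle : n ^ 2 * x ^ 2 + m * x * b ≤ A * (1 + x ^ 2) * n := by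
    have t1 : ((n * (1 - a) + p) * a⁻¹) ^ 2 ≤ 16 * (C + p) ^ 2 * n := by
      have h1 : 0 ≤ n * (1 - a) + p := by
        have : 0 ≤ 1 - a := by linarith
        positivity
      have h2 : n * (1 - a) + p ≤ C + p := by nlinarith
      have h3 : (n * (1 - a) + p) * a⁻¹ ≤ (C + p) * 4 := by gcongr
      calc ((n * (1 - a) + p) * a⁻¹) ^ 2 ≤ ((C + p) * 4) ^ 2 := by gcongr
        _ = 16 * (C + p) ^ 2 * 1 := by ring
        _ ≤ _ := by gcongr
    have t2 : m ^ 2 * e * (a⁻¹ ^ 2 * (a - e)⁻¹) ≤ 64 * (1 + p) ^ 2 * C * n := by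
      calc m ^ 2 * e * (a⁻¹ ^ 2 * (a - e)⁻¹) ≤ m ^ 2 * α * (a⁻¹ ^ 2 * (a - e)⁻¹) := by gcongr
        _ ≤ ((1 + p) * n) ^ 2 * α * (4 ^ 2 * 4) := by gcongr
        _ = 64 * (1 + p) ^ 2 * (n * α) * n := by ring
        _ ≤ _ := by gcongr
    have t3 : m * x * d * (a⁻¹ * (a - e)⁻¹)
        ≤ 32 * (1 + p) * (1 + (1 + p) * C) * (1 + x ^ 2) * n := by
      have hmα : m * α ≤ (1 + p) * C := by
        calc m * α ≤ (1 + p) * n * α := by gcongr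
          _ = (1 + p) * (n * α) := by ring
          _ ≤ _ := by gcongr
      have hD : 0 ≤ (1 + p) * C := by positivity
      have hxd : x * d ≤ 2 * (1 + (1 + p) * C) * (1 + x ^ 2) := by
        calc x * d ≤ x * (1 + x + (1 + p) * C) := by gcongr; linarith
          _ ≤ _ := by nlinarith [sq_nonneg (x - 1), mul_nonneg hD (sq_nonneg (x - 1)),
                        mul_nonneg hD (sq_nonneg x)]
      calc m * x * d * (a⁻¹ * (a - e)⁻¹) ≤ m * x * d * (4 * 4) := by gcongr
        _ = 16 * (m * (x * d)) := by ring
        _ ≤ 16 * ((1 + p) * n * (2 * (1 + (1 + p) * C) * (1 + x ^ 2))) := by gcongr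
        _ = _ := by ring
    have hx2 := sq_nonneg x
    have s1 := mul_le_mul_of_nonneg_left t1 hx2
    have s2 := mul_le_mul_of_nonneg_left t2 hx2
    have u1 : 0 ≤ 16 * (C + p) ^ 2 * n := by positivity
    have u2 : 0 ≤ 64 * (1 + p) ^ 2 * C * n := by positivity
    rw [hc, hA]
    linarith
  have hA0 : 0 ≤ A * (1 + x ^ 2) * n := by positivity
  have hpart : ∀ K : ℕ, ∑ k ∈ Finset.range K, v k * ((k : ℝ) - n * x) ^ 2
      ≤ A * (1 + x ^ 2) * n := by
    intro K
    -- Beyond this index the boundary term of `sum_sq_eq` has a favourable sign.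
    obtain ⟨M, hM⟩ := exists_nat_ge (1 + (a - e) * |b|)
    have hL : (M : ℝ) ≤ (max K M : ℕ) := by exact_mod_cast le_max_right K M
    calc ∑ k ∈ Finset.range K, v k * ((k : ℝ) - n * x) ^ 2
        ≤ ∑ k ∈ Finset.range (max K M), v k * ((k : ℝ) - n * x) ^ 2 :=
          Finset.sum_le_sum_of_subset_of_nonneg (Finset.range_mono (le_max_left _ _))
            fun k _ _ => mul_nonneg (hv k) (sq_nonneg _)
      _ ≤ A * (1 + x ^ 2) * n := by
          rw [sum_sq_eq v m n x a d e b ha0.ne' hr0.ne' hb hrec]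
          have h1 : 0 ≤ (((max K M : ℕ) : ℝ) - 1) / (a - e) + b := by
            have : |b| ≤ (((max K M : ℕ) : ℝ) - 1) / (a - e) := by
              rw [le_div_iff₀ hr0]; linarith
            linarith [neg_abs_le b]
          have h2 := mul_nonneg (hG (max K M)) h1
          have h3 : 0 ≤ ∑ k ∈ Finset.range (max K M), v k := Finset.sum_nonneg fun k _ => hv k
          have h4 := mul_le_mul_of_nonneg_right hcle h3
          have h5 := mul_le_mul_of_nonneg_left (hV (max K M)) hA0
          linarith
  refine Real.tsum_le_of_sum_range_le (fun k => mul_nonneg (hv k) (sq_nonneg _)) fun K => ?_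
  have hscale : ∑ k ∈ Finset.range K, v k * ((k : ℝ) / n - x) ^ 2
      = (∑ k ∈ Finset.range K, v k * ((k : ℝ) - n * x) ^ 2) / n ^ 2 := by
    rw [Finset.sum_div]
    refine Finset.sum_congr rfl fun k _ => ?_
    field_simp
  rw [hscale, div_le_div_iff₀ (by positivity) hn0]
  have := mul_le_mul_of_nonneg_right (hpart K) hn0.le
  linarith

/-- for a sequence `α_n ≥ 0` with `sup_n n·α_n < ∞`, there are
`A₁ > 0` and `N ≥ 1` with `L_n^{(α_n)}((t-x)²; x) ≤ A₁(1+x²)/n` for all `n ≥ N`, `x ∈ I`. -/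
theorem second_central_moment_bound (p : ℕ) (lam : ℤ) (hlam : lam = -1 ∨ lam = 0)
    (α : ℕ → ℝ) (hα : ∀ n, 0 ≤ α n) (hbd : ∃ C : ℝ, ∀ n : ℕ, (n : ℝ) * α n ≤ C) :
    ∃ A₁ > (0 : ℝ), ∃ N : ℕ, 1 ≤ N ∧ ∀ n ≥ N, ∀ x ∈ Iset lam,
      ∑' k : ℕ, w n p lam (α n) x k * ((k : ℝ) / n - x) ^ 2 ≤ A₁ * (1 + x ^ 2) / n := by
  obtain ⟨C, hC⟩ := hbd
  have hC0 : 0 ≤ C := by simpa using hC 0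
  obtain ⟨N, hN⟩ := exists_nat_ge (4 * C)
  refine ⟨16 * (C + p) ^ 2 + 64 * (1 + p) ^ 2 * C + 32 * (1 + p) * (1 + (1 + p) * C),
    by positivity, N + 1, by omega, fun n hn x hxI => ?_⟩
  have hn1 : 1 ≤ n := by omega
  have hnr : (1 : ℝ) ≤ n := by exact_mod_cast hn1
  have hα0 := hα n
  have hα4 : α n ≤ 1 / 4 := by
    have h1 : (N : ℝ) ≤ n := by exact_mod_cast (by omega : N ≤ n)
    nlinarith [hC n]
  have hm1 : (1 : ℝ) ≤ n + p := by
    have : (0 : ℝ) ≤ p := by positivity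
    linarith
  rcases hlam with rfl | rfl
  · have hx : 0 ≤ x ∧ x ≤ 1 := by simpa [Iset] using hxI
    obtain ⟨hx0, hx1⟩ := hx
    simp only [w_neg_one_eq n p hn1]
    refine tsum_sq_le _ (n + p) n x 1 (1 - x + (n + p) * α n) (-α n) (α n) C p
      (polyaBin_nonneg hx0 hx1 hα0 _) (sum_polyaBin_le hx0 hx1 hα0 _) (fun k => ?_)
      (fun k => ?_) hx0 (by positivity) rfl hnr hα0 (hC n) (by norm_num) le_rfl (by linarith)
      (by linarith) (by linarith) (by linarith) ?_
    · rcases le_or_gt k (n + p) with hk | hk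
      · have hkr : (k : ℝ) ≤ n + p := by exact_mod_cast hk
        have := polyaBin_nonneg hx0 hx1 hα0 (n + p) k
        have h2 : 0 ≤ 1 - x + (n + p) * α n + -α n * k := by nlinarith
        positivity
      · simp [polyaBin, Nat.choose_eq_zero_of_lt hk]
    · have h := polyaBin_rec (x := x) (α := α n) (n + p) k
      push_cast at h
      linear_combination h
    · have : 0 ≤ 1 - x := by linarith
      positivity
  · have hx0 : 0 ≤ x := by simpa [Iset] using hxI
    simp only [w_zero_eq n p hn1]
    have hd0 : 0 ≤ 1 + x + ((n : ℝ) + p - 1) * α n := by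
      have : 0 ≤ (n : ℝ) + p - 1 := by linarith
      positivity
    refine tsum_sq_le _ (n + p) n x (1 - α n) (1 + x + (n + p - 1) * α n) (α n) (α n) C p
      (polyaNB_nonneg hx0 hα0 _) (sum_polyaNB_le hx0 hα0 _) (fun k => ?_)
      (fun k => ?_) hx0 (by positivity) rfl hnr hα0 (hC n) (by linarith) (by linarith)
      (by linarith) (by linarith) le_rfl (by linarith) hd0
    · have := polyaNB_nonneg hx0 hα0 (n + p) k
      positivity
    · have h := polyaNB_rec hx0 hα0 (n + p) (by omega) k
      push_cast at h
      linear_combination h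
end
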